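/- arXiv:2509.12640 — 2 statements merged into one kernel-verified Lean document; each statement's English description precedes it below -/
import Mathlib

section
/- For any connected graph G, if the second largest eigenvalue of its distance matrix is less than -1/2, then G is chordal (every cycle of length at least 4 has a chord). -/
open Polynomial

/-- The distance matrix of a graph, with entries the shortest-path distances. -/
noncomputable def distMatrix {V : Type*} [Fintype V] (G : SimpleGraph V) :
    Matrix V V ℝ := fun i j => (G.dist i j : ℝ)

/-- A graph is chordal if every cycle of length at least four has a chord,
i.e. an edge joining two vertices of the cycle that is not an edge of the cycle. -/
def IsChordal {V : Type*} (G : SimpleGraph V) : Prop :=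
  ∀ (a : V) (w : G.Walk a a), w.IsCycle → 4 ≤ w.length →
    ∃ u v, u ∈ w.support ∧ v ∈ w.support ∧ G.Adj u v ∧ s(u, v) ∉ w.edges

/-!
A hole of `G` produces four vertices `p, q, r, s` whose perimeter
`d(p,q) + d(q,r) + d(r,s) + d(s,p)` is at most `2 min (d(p,r), d(q,s)) + 1`: on a chordless cycle
take the shortest arc that is not geodesic; it has at least three edges, and `p, q, r, s` are its
first two and its last two vertices. The quadratic form of the distance matrix is then at least
`-1/2` times the squared norm on the plane spanned by `e_p + e_r` and `e_q + e_s`, so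
Courant–Fischer gives `λ₂ ≥ -1/2`.
-/

open scoped InnerProductSpace

section CourantFischer

variable {𝕜 E : Type*} [RCLike 𝕜] [NormedAddCommGroup E] [InnerProductSpace 𝕜 E]
  [FiniteDimensional 𝕜 E] {T : E →ₗ[𝕜] E} {n : ℕ}

theorem re_inner_map_self_eq_sum_eigenvalues (hT : T.IsSymmetric)
    (hn : Module.finrank 𝕜 E = n) (x : E) :
    RCLike.re ⟪x, T x⟫_𝕜 =
      ∑ i, hT.eigenvalues hn i * ‖⟪hT.eigenvectorBasis hn i, x⟫_𝕜‖ ^ 2 := by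
  rw [← (hT.eigenvectorBasis hn).sum_inner_mul_inner, map_sum]
  refine Finset.sum_congr rfl fun i _ => ?_
  rw [← hT, hT.apply_eigenvectorBasis, inner_smul_left, RCLike.conj_ofReal, mul_left_comm,
    RCLike.re_ofReal_mul, inner_mul_symm_re_eq_norm, norm_mul, norm_inner_symm, sq]

theorem exists_mem_re_inner_map_self_le_eigenvalues (hT : T.IsSymmetric)
    (hn : Module.finrank 𝕜 E = n) (k : Fin n) {W : Submodule 𝕜 E}
    (hW : k < Module.finrank 𝕜 W) :
    ∃ z ∈ W, z ≠ 0 ∧ RCLike.re ⟪z, T z⟫_𝕜 ≤ hT.eigenvalues hn k * ‖z‖ ^ 2 := by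
  let b := hT.eigenvectorBasis hn
  let coords : W →ₗ[𝕜] Fin k → 𝕜 :=
    LinearMap.pi fun i => (innerₛₗ 𝕜 (b (i.castLE k.isLt.le))).comp W.subtype
  have hker : LinearMap.ker coords ≠ ⊥ := LinearMap.ker_ne_bot_of_finrank_lt (by simpa using hW)
  obtain ⟨⟨z, hzW⟩, hz, hz0⟩ := Submodule.exists_mem_ne_zero_of_ne_bot hker
  have hcoord : ∀ i < k, ⟪b i, z⟫_𝕜 = 0 := fun i hi => congrFun hz ⟨i, hi⟩
  refine ⟨z, hzW, by simpa using hz0, ?_⟩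
  rw [re_inner_map_self_eq_sum_eigenvalues hT hn, ← b.sum_sq_norm_inner_right, Finset.mul_sum]
  refine Finset.sum_le_sum fun i _ => ?_
  rcases lt_or_ge i k with hi | hi
  · simp [b, hcoord i hi]
  · gcongr
    exact hT.eigenvalues_antitone hn hi

end CourantFischer

section Compression

theorem sq_add_sq_mul_min_sub_abs_le {R : Type*} [CommRing R] [LinearOrder R]
    [IsStrictOrderedRing R] (a b α β γ : R) :
    (a ^ 2 + b ^ 2) * (min α β - |γ|) ≤ a ^ 2 * α + b ^ 2 * β + 2 * a * b * γ := by
  have hcross : |2 * a * b * γ| ≤ (a ^ 2 + b ^ 2) * |γ| := by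
    rw [abs_mul, ← sq_abs a, ← sq_abs b, abs_mul, abs_mul, abs_two]
    gcongr
    exact two_mul_le_add_sq _ _
  calc (a ^ 2 + b ^ 2) * (min α β - |γ|)
      = a ^ 2 * min α β + b ^ 2 * min α β - (a ^ 2 + b ^ 2) * |γ| := by ring
    _ ≤ a ^ 2 * α + b ^ 2 * β - |2 * a * b * γ| := by
      gcongr
      exacts [min_le_left α β, min_le_right α β]
    _ ≤ a ^ 2 * α + b ^ 2 * β + 2 * a * b * γ := by linarith [neg_abs_le (2 * a * b * γ)]

variable {E : Type*} [NormedAddCommGroup E] [InnerProductSpace ℝ E]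

theorem finrank_span_pair_of_inner_eq_zero {x y : E} (hx : x ≠ 0) (hy : y ≠ 0)
    (hxy : ⟪x, y⟫_ℝ = 0) : Module.finrank ℝ (Submodule.span ℝ {x, y}) = 2 := by
  have hindep : LinearIndependent ℝ ![x, y] :=
    linearIndependent_of_ne_zero_of_inner_eq_zero (by simp [Fin.forall_fin_two, hx, hy])
      (by simp [Pairwise, Fin.forall_fin_two, hxy, real_inner_comm x y])
  rw [← Matrix.range_cons_cons_empty x y ![], finrank_span_eq_card hindep, Fintype.card_fin]

theorem min_inner_map_self_sub_abs_inner_map_le_eigenvalues [FiniteDimensional ℝ E]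
    {T : E →ₗ[ℝ] E} (hT : T.IsSymmetric) {n : ℕ} (hn : Module.finrank ℝ E = n) (h1 : 1 < n)
    {x y : E} (hx : x ≠ 0) (hnorm : ‖x‖ = ‖y‖) (hxy : ⟪x, y⟫_ℝ = 0) :
    min ⟪x, T x⟫_ℝ ⟪y, T y⟫_ℝ - |⟪x, T y⟫_ℝ| ≤ hT.eigenvalues hn ⟨1, h1⟩ * ‖x‖ ^ 2 := by
  have hy : y ≠ 0 := norm_ne_zero_iff.mp (hnorm ▸ norm_ne_zero_iff.mpr hx)
  obtain ⟨z, hz, hz0, hle⟩ := exists_mem_re_inner_map_self_le_eigenvalues hT hn ⟨1, h1⟩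
    (W := Submodule.span ℝ {x, y}) (by simp [finrank_span_pair_of_inner_eq_zero hx hy hxy])
  obtain ⟨a, b, rfl⟩ := Submodule.mem_span_pair.mp hz
  have hform : ⟪a • x + b • y, T (a • x + b • y)⟫_ℝ =
      a ^ 2 * ⟪x, T x⟫_ℝ + b ^ 2 * ⟪y, T y⟫_ℝ + 2 * a * b * ⟪x, T y⟫_ℝ := by
    have hyx : ⟪y, T x⟫_ℝ = ⟪x, T y⟫_ℝ := by rw [← hT, real_inner_comm]
    simp only [map_add, map_smul, inner_add_left, inner_add_right, real_inner_smul_left,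
      real_inner_smul_right, hyx]
    ring
  have hsq : ‖a • x + b • y‖ ^ 2 = (a ^ 2 + b ^ 2) * ‖x‖ ^ 2 := by
    rw [norm_add_sq_real, real_inner_smul_left, real_inner_smul_right, hxy, norm_smul, norm_smul,
      ← hnorm, mul_pow, mul_pow, Real.norm_eq_abs, Real.norm_eq_abs, sq_abs, sq_abs]
    ring
  have hpos : 0 < a ^ 2 + b ^ 2 :=
    pos_of_mul_pos_left (hsq ▸ pow_pos (norm_pos_iff.mpr hz0) 2) (sq_nonneg _)
  refine le_of_mul_le_mul_left ?_ hpos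
  calc (a ^ 2 + b ^ 2) * (min ⟪x, T x⟫_ℝ ⟪y, T y⟫_ℝ - |⟪x, T y⟫_ℝ|)
      ≤ ⟪a • x + b • y, T (a • x + b • y)⟫_ℝ := hform ▸ sq_add_sq_mul_min_sub_abs_le a b _ _ _
    _ ≤ hT.eigenvalues hn ⟨1, h1⟩ * ‖a • x + b • y‖ ^ 2 := hle
    _ = (a ^ 2 + b ^ 2) * (hT.eigenvalues hn ⟨1, h1⟩ * ‖x‖ ^ 2) := by rw [hsq]; ring

end Compression

section Matrix

variable {𝕜 V : Type*} [RCLike 𝕜] [Fintype V] [DecidableEq V]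

theorem inner_single_toEuclideanLin_single (A : Matrix V V 𝕜) (i j : V) :
    ⟪EuclideanSpace.single i (1 : 𝕜), A.toEuclideanLin (EuclideanSpace.single j 1)⟫_𝕜 = A i j := by
  rw [EuclideanSpace.inner_single_left, Matrix.toLpLin_apply]
  simp

theorem inner_single_add_single_toEuclideanLin_single_add_single (A : Matrix V V 𝕜) (i j k l : V) :
    ⟪EuclideanSpace.single i (1 : 𝕜) + EuclideanSpace.single j 1,
      A.toEuclideanLin (EuclideanSpace.single k 1 + EuclideanSpace.single l 1)⟫_𝕜 =
      A i k + A i l + A j k + A j l := by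
  simp only [map_add, inner_add_left, inner_add_right, inner_single_toEuclideanLin_single]
  ring

theorem norm_single_add_single {i j : V} (hij : i ≠ j) :
    ‖EuclideanSpace.single i (1 : 𝕜) + EuclideanSpace.single j 1‖ = √2 := by
  rw [← Real.sqrt_sq (norm_nonneg _), norm_add_sq (𝕜 := 𝕜)]
  simp [EuclideanSpace.inner_single_left, hij, one_add_one_eq_two]

theorem two_mul_min_sub_abs_le_two_mul_eigenvalues₀ {A : Matrix V V ℝ} (hA : A.IsHermitian)
    (hdiag : ∀ i, A i i = 0) (h1 : 1 < Fintype.card V) {p q r s : V}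
    (hnodup : [p, q, r, s].Nodup) :
    2 * min (A p r) (A q s) - |A p q + A q r + A r s + A s p| ≤
      2 * hA.eigenvalues₀ ⟨1, h1⟩ := by
  obtain ⟨⟨hpq, hpr, hps⟩, ⟨hqr, hqs⟩, hrs⟩ :
      (p ≠ q ∧ p ≠ r ∧ p ≠ s) ∧ (q ≠ r ∧ q ≠ s) ∧ r ≠ s := by simpa using hnodup
  let e : V → EuclideanSpace ℝ V := fun i => EuclideanSpace.single i 1
  have horth : ⟪e p + e r, e q + e s⟫_ℝ = 0 := by
    simp [e, inner_add_left, inner_add_right, EuclideanSpace.inner_single_left, hpq, hps,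
      hqr.symm, hrs]
  have hnorm : ‖e p + e r‖ = √2 := norm_single_add_single hpr
  have hnorm' : ‖e q + e s‖ = √2 := norm_single_add_single hqs
  have hsymm : ∀ i j, A i j = A j i := fun i j => hA.apply j i
  have hself : ∀ i j, A i i + A i j + A j i + A j j = 2 * A i j := fun i j => by
    rw [hdiag, hdiag, hsymm j i]; ring
  have hcross : A p q + A p s + A r q + A r s = A p q + A q r + A r s + A s p := by
    rw [hsymm p s, hsymm r q]; ring
  have key := min_inner_map_self_sub_abs_inner_map_le_eigenvalues
    (Matrix.isSymmetric_toEuclideanLin_iff.mpr hA) finrank_euclideanSpace h1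
    (norm_ne_zero_iff.mp (by simp [hnorm])) (hnorm.trans hnorm'.symm) horth
  simp only [e, inner_single_add_single_toEuclideanLin_single_add_single] at key
  rw [hself, hself, hcross, ← mul_min_of_nonneg _ _ zero_le_two, norm_single_add_single hpr,
    Real.sq_sqrt zero_le_two, mul_comm _ (2 : ℝ)] at key
  exact key

theorem eigenvalues₀_eq_of_charpoly_eq_prod_X_sub_C {A : Matrix V V 𝕜} (hA : A.IsHermitian)
    {μ : Fin (Fintype.card V) → ℝ} (hμ : Antitone μ)
    (hchar : A.charpoly = ∏ i, (X - C (μ i : 𝕜))) : hA.eigenvalues₀ = μ := by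
  have hroots : A.charpoly.roots.map RCLike.re = ↑(List.ofFn μ) := by
    rw [hchar, roots_prod _ _ (by simp [Finset.prod_ne_zero_iff, X_sub_C_ne_zero])]
    simp [Fin.univ_val_map, Function.comp_def]
  rw [← List.ofFn_inj, ← hA.sort_roots_charpoly_eq_eigenvalues₀, hroots]
  exact List.mergeSort_of_pairwise (by simpa using hμ.sortedGE_ofFn.pairwise)

theorem card_eq_of_charpoly_eq_prod_X_sub_C {R ι : Type*} [CommRing R] [Nontrivial R] [Fintype ι]
    {A : Matrix V V R} {μ : ι → R} (hchar : A.charpoly = ∏ i, (X - C (μ i))) :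
    Fintype.card V = Fintype.card ι := by
  rw [← A.charpoly_natDegree_eq_dim, hchar, natDegree_finsetProd_X_sub_C_eq_card,
    Finset.card_univ]

end Matrix

section Quadrilateral

variable {V : Type*} {G : SimpleGraph V} {u v : V}

/-- Four distinct vertices, in cyclic order, whose perimeter in the graph distance exceeds twice the
shorter diagonal by at most one. These are the configurations that a second distance eigenvalue
below `-1/2` rules out. -/
structure IsThinQuadrilateral (G : SimpleGraph V) (p q r s : V) : Prop where
  nodup : [p, q, r, s].Nodup
  perimeter_le : G.dist p q + G.dist q r + G.dist r s + G.dist s p ≤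
    2 * min (G.dist p r) (G.dist q s) + 1

theorem dist_getVert_add_le (w : G.Walk u v) (i m : ℕ) :
    G.dist (w.getVert i) (w.getVert (i + m)) ≤ m := by
  rw [← w.drop_getVert]
  exact (G.dist_le ((w.drop i).take m)).trans (by simp)

theorem exists_minimal_nongeodesic_segment {w : G.Walk u v} (hw : G.dist u v < w.length) :
    ∃ i k, i + k ≤ w.length ∧ G.dist (w.getVert i) (w.getVert (i + k)) < k ∧
      ∀ m < k, ∀ j, j + m ≤ w.length → G.dist (w.getVert j) (w.getVert (j + m)) = m := by
  have hex : ∃ k i, i + k ≤ w.length ∧ G.dist (w.getVert i) (w.getVert (i + k)) < k :=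
    ⟨w.length, 0, by simpa using hw⟩
  classical
  obtain ⟨i, hi, hlt⟩ := Nat.find_spec hex
  refine ⟨i, Nat.find hex, hi, hlt, fun m hm j hj => ?_⟩
  refine (dist_getVert_add_le w j m).antisymm (not_lt.mp fun h => ?_)
  exact Nat.find_min hex hm ⟨j, hj, h⟩

theorem exists_isThinQuadrilateral_of_isPath (hG : G.Connected) {w : G.Walk u v} (hw : w.IsPath)
    (hdist : G.dist u v < w.length)
    (hskip : ∀ i, i + 2 ≤ w.length → ¬ G.Adj (w.getVert i) (w.getVert (i + 2))) :
    ∃ p q r s, IsThinQuadrilateral G p q r s := by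
  obtain ⟨i, k, hik, hlt, hgeod⟩ := exists_minimal_nongeodesic_segment hdist
  have hk : 3 ≤ k := by
    by_contra! hk
    have hpos : 0 < G.dist (w.getVert i) (w.getVert (i + k)) :=
      hG.pos_dist_of_ne fun h => by
        have := hw.getVert_injOn (Nat.le_of_add_right_le hik) hik h
        omega
    obtain rfl : k = 2 := by omega
    exact hskip i hik (SimpleGraph.dist_eq_one_iff_adj.mp (by omega))
  obtain ⟨m, rfl⟩ : ∃ m, k = m + 3 := Nat.exists_eq_add_of_le' hk
  have hle : ∀ j ∈ [i, i + 1, i + (m + 2), i + (m + 3)], j ≤ w.length := by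
    simp only [List.forall_mem_cons]
    refine ⟨?_, ?_, ?_, hik, by simp⟩ <;> omega
  have hnodup : ([i, i + 1, i + (m + 2), i + (m + 3)].map w.getVert).Nodup :=
    List.Nodup.map_on (fun j hj l hl => hw.getVert_injOn (hle j hj) (hle l hl)) (by simp)
  refine ⟨w.getVert i, w.getVert (i + 1), w.getVert (i + (m + 2)), w.getVert (i + (m + 3)),
    hnodup, ?_⟩
  have hpq := hgeod 1 (by omega) i (by omega)
  have hpr := hgeod (m + 2) (by omega) i (by omega)
  have hqr := hgeod (m + 1) (by omega) (i + 1) (by omega)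
  have hqs := hgeod (m + 2) (by omega) (i + 1) (by omega)
  have hrs := hgeod 1 (by omega) (i + (m + 2)) (by omega)
  rw [G.dist_comm] at hlt
  grind

theorem mk_getVert_add_two_notMem_edges {w : G.Walk u u} (hw : w.IsCycle) (hlen : 4 ≤ w.length)
    {i : ℕ} (h1 : 1 ≤ i) (hi : i + 2 ≤ w.length) :
    s(w.getVert i, w.getVert (i + 2)) ∉ w.edges := by
  have hinj : ∀ j l, 1 ≤ j → j ≤ w.length → 1 ≤ l → l ≤ w.length →
      w.getVert j = w.getVert l → j = l := fun j l hj hj' hl hl' h =>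
    hw.getVert_injOn ⟨hj, hj'⟩ ⟨hl, hl'⟩ h
  have hclosed : w.getVert 0 = w.getVert w.length := by simp
  rw [w.mk_mem_edges_iff_exists]
  rintro ⟨j, hj, hedge⟩
  grind

theorem exists_isThinQuadrilateral_of_isCycle (hG : G.Connected) {w : G.Walk u u}
    (hw : w.IsCycle) (hlen : 4 ≤ w.length)
    (hchordless : ∀ x y, x ∈ w.support → y ∈ w.support → G.Adj x y → s(x, y) ∈ w.edges) :
    ∃ p q r s, IsThinQuadrilateral G p q r s := by
  have htail : w.tail.length + 1 = w.length := w.length_tail_add_one hw.not_nil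
  have hdist : G.dist w.snd u = 1 :=
    SimpleGraph.dist_eq_one_iff_adj.mpr (w.adj_snd hw.not_nil).symm
  refine exists_isThinQuadrilateral_of_isPath hG hw.isPath_tail (by omega) fun i hi hadj => ?_
  rw [w.getVert_tail, w.getVert_tail] at hadj
  exact mk_getVert_add_two_notMem_edges hw hlen (Nat.le_add_left 1 i) (by omega)
    (hchordless _ _ (w.getVert_mem_support _) (w.getVert_mem_support _) hadj)

end Quadrilateral

section DistMatrix

variable {V : Type*} [Fintype V]

theorem isHermitian_distMatrix (G : SimpleGraph V) : (distMatrix G).IsHermitian := by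
  ext i j
  simp [distMatrix, G.dist_comm]

theorem not_isThinQuadrilateral_of_eigenvalues₀_lt [DecidableEq V] {G : SimpleGraph V}
    (h1 : 1 < Fintype.card V)
    (hlt : (isHermitian_distMatrix G).eigenvalues₀ ⟨1, h1⟩ < -1 / 2) (p q r s : V) :
    ¬ IsThinQuadrilateral G p q r s := by
  rintro ⟨hnodup, hle⟩
  have hspec := two_mul_min_sub_abs_le_two_mul_eigenvalues₀ (isHermitian_distMatrix G)
    (fun i => by simp [distMatrix]) h1 hnodup
  have hle' : (G.dist p q + G.dist q r + G.dist r s + G.dist s p : ℝ) ≤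
      2 * min (G.dist p r : ℝ) (G.dist q s) + 1 := by exact_mod_cast hle
  simp only [distMatrix] at hspec
  rw [abs_of_nonneg (by positivity)] at hspec
  linarith

end DistMatrix

theorem stmt0_general {V : Type*} [Fintype V] [DecidableEq V] {n : ℕ} (hn : 2 ≤ n)
    (G : SimpleGraph V) (hG : G.Connected) (μ : Fin n → ℝ) (hmono : Antitone μ)
    (hchar : (distMatrix G).charpoly = ∏ i, (X - C (μ i)))
    (hlt : μ ⟨1, hn⟩ < -1 / 2) : IsChordal G := by
  obtain rfl : Fintype.card V = n := by
    simpa using card_eq_of_charpoly_eq_prod_X_sub_C hchar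
  have hspec : (isHermitian_distMatrix G).eigenvalues₀ = μ :=
    eigenvalues₀_eq_of_charpoly_eq_prod_X_sub_C _ hmono hchar
  intro a w hw hlen
  by_contra! hchordless
  obtain ⟨p, q, r, s, hthin⟩ := exists_isThinQuadrilateral_of_isCycle hG hw hlen hchordless
  exact not_isThinQuadrilateral_of_eigenvalues₀_lt hn (hspec ▸ hlt) p q r s hthin

theorem stmt0 {n : ℕ} (hn : 2 ≤ n) (G : SimpleGraph (Fin n)) (hG : G.Connected)
    (μ : Fin n → ℝ) (hmono : Antitone μ)
    (hchar : (distMatrix G).charpoly = ∏ i, (X - C (μ i)))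
    (hlt : μ ⟨1, hn⟩ < -1/2) : IsChordal G :=
  stmt0_general hn G hG μ hmono hchar hlt
end

section
/- Let G = T_4^t (t ≥ 1) be the graph on n = t+6 vertices obtained from three triangles v v_1 v_2, v u_1 u_2, v u_2 u_3 (so the second and third triangle share the edge v u_2) with t pendant edges attached at v. Then -2 is a distance eigenvalue of G with multiplicity at least t (equivalently rank(D(G)+2I_n) = 6), and -1 is a distance eigenvalue with multiplicity at least 1. -/
open Polynomial

/-- The tricyclic graph `T₄ᵗ` on `t + 6` vertices: triangles `0,1,2`, `0,3,4`, `0,4,5`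
(the last two sharing the edge `{0,4}`), with `t` pendant edges at `0`. -/
def T4 (t : ℕ) : SimpleGraph (Fin (t + 6)) :=
  SimpleGraph.fromRel (fun a b =>
    (a = 0 ∧ b ≠ 0) ∨ (a.val, b.val) ∈ [(1, 2), (3, 4), (4, 5)])

/-!
Two vertices with the same open neighbourhood have equal rows in `D + 2I`: they are at distance `2`
from each other and equidistant from every other vertex. In `T₄ᵗ` this happens for `u₁, u₃` and for
the pendant vertices, so `D + 2I` has the rank of the corresponding `6 × 6` matrix of the graph
obtained by identifying such twins, and that matrix is invertible. By rank-nullity the eigenspace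
of `-2` has dimension `t`. Likewise the adjacent twins `v₁, v₂` give equal rows in `D + I`.
-/

section Matrix

variable {m n m' n' R K : Type*}

theorem rank_submatrix_of_surjective [CommSemiring R] [StrongRankCondition R] [Fintype n]
    [Fintype n'] (A : Matrix m n R) {r : m' → m} {c : n' → n} (hr : r.Surjective)
    (hc : c.Surjective) : (A.submatrix r c).rank = A.rank := by
  refine (A.rank_submatrix_le r c).antisymm ?_
  have hA : (A.submatrix r c).submatrix (Function.surjInv hr) (Function.surjInv hc) = A := by
    rw [Matrix.submatrix_submatrix, (Function.rightInverse_surjInv hr).comp_eq_id,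
      (Function.rightInverse_surjInv hc).comp_eq_id, Matrix.submatrix_id_id]
  calc A.rank
      = ((A.submatrix r c).submatrix (Function.surjInv hr) (Function.surjInv hc)).rank := by rw [hA]
    _ ≤ (A.submatrix r c).rank := Matrix.rank_submatrix_le _ _ _

theorem card_le_rank_add_rootMultiplicity_charpoly [Field K] [Fintype n] [DecidableEq n]
    (A : Matrix n n K) (μ : K) :
    Fintype.card n ≤ (A - μ • (1 : Matrix n n K)).rank + A.charpoly.rootMultiplicity μ := by
  have hker : Module.End.eigenspace (Matrix.toLin' A) μ =
      LinearMap.ker (A - μ • (1 : Matrix n n K)).mulVecLin := by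
    rw [Module.End.eigenspace_def, ← Matrix.toLin'_apply', map_sub, map_smul, Matrix.toLin'_one]
    rfl
  have hle := LinearMap.finrank_eigenspace_le (Matrix.toLin' A) μ
  rw [Matrix.charpoly_toLin', hker] at hle
  calc Fintype.card n
      = (A - μ • (1 : Matrix n n K)).rank +
          Module.finrank K (LinearMap.ker (A - μ • (1 : Matrix n n K)).mulVecLin) := by
        rw [Matrix.rank, LinearMap.finrank_range_add_finrank_ker,
          Module.finrank_fintype_fun_eq_card]
    _ ≤ _ := by gcongr

end Matrix

section Distance

open SimpleGraph

variable {V W : Type*} {G : SimpleGraph V} {H : SimpleGraph W}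

theorem edist_hom_apply_le (φ : G →g H) (u v : V) : H.edist (φ u) (φ v) ≤ G.edist u v :=
  le_iInf fun p => p.length_map φ ▸ edist_le (p.map φ)

theorem dist_iso_apply (e : G ≃g H) (u v : V) : H.dist (e u) (e v) = G.dist u v := by
  have hle : H.edist (e u) (e v) ≤ G.edist u v := edist_hom_apply_le e.toHom u v
  have hge : G.edist u v ≤ H.edist (e u) (e v) := by
    simpa using edist_hom_apply_le e.symm.toHom (e u) (e v)
  exact congrArg ENat.toNat (hle.antisymm hge)

theorem dist_eq_two_of_adj_of_adj {u v w : V} (hne : u ≠ v) (hnadj : ¬G.Adj u v)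
    (hu : G.Adj u w) (hv : G.Adj v w) : G.dist u v = 2 := by
  have h : G.edist u v = 2 := edist_eq_two_iff.2 ⟨hne, hnadj, w, hu, hv⟩
  simp [SimpleGraph.dist, h]

theorem dist_eq_dist_of_adj_iff_adj {u v x : V}
    (h : ∀ y, y ≠ u → y ≠ v → (G.Adj u y ↔ G.Adj v y)) (hu : x ≠ u) (hv : x ≠ v) :
    G.dist u x = G.dist v x := by
  classical
  have hswap : ∀ {a b}, G.Adj (Equiv.swap u v a) (Equiv.swap u v b) ↔ G.Adj a b := by
    intro a b
    grind [SimpleGraph.adj_comm, SimpleGraph.irrefl]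
  have := dist_iso_apply (⟨Equiv.swap u v, hswap⟩ : G ≃g G) u x
  simpa [Equiv.swap_apply_of_ne_of_ne hu hv] using this.symm

theorem dist_comap_of_apply_ne {f : V → W} (hf : f.Surjective) {u v : V} (h : f u ≠ f v) :
    (H.comap f).dist u v = H.dist (f u) (f v) := by
  classical
  -- A section of `f` through `u` and `v` is a homomorphism from `H` back to `H.comap f`.
  let s : W → V := Function.update (Function.update (Function.surjInv hf) (f u) u) (f v) v
  have hsu : s (f u) = u := by simp [s, h]
  have hsv : s (f v) = v := by simp [s]
  have hfs : ∀ a, f (s a) = a := by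
    intro a
    grind [Function.surjInv_eq]
  let σ : H →g H.comap f := ⟨s, fun {a b} hab => by simpa [hfs] using hab⟩
  have hle : (H.comap f).edist u v ≤ H.edist (f u) (f v) := by
    simpa [σ, hsu, hsv] using edist_hom_apply_le σ (f u) (f v)
  exact congrArg ENat.toNat (hle.antisymm (edist_hom_apply_le (.comap f H) u v))

theorem dist_comap_of_apply_eq {f : V → W} (hf : f.Surjective) {u v : V} (hne : u ≠ v)
    (h : f u = f v) (hu : ¬H.IsIsolated (f u)) : (H.comap f).dist u v = 2 := by
  obtain ⟨c, hc⟩ := exists_adj_iff_not_isIsolated.2 hu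
  obtain ⟨w, rfl⟩ := hf c
  exact dist_eq_two_of_adj_of_adj hne (by simp [h]) (w := w) hc (by simpa [← h] using hc)

end Distance

section DistMatrix

variable {V W : Type*} [Fintype V] [Fintype W] [DecidableEq V] [DecidableEq W]
  {G : SimpleGraph V} {H : SimpleGraph W}

theorem distMatrix_comap_add_two_smul_one {f : V → W} (hf : f.Surjective)
    (hH : ∀ a, ¬H.IsIsolated a) :
    distMatrix (H.comap f) + (2 : ℝ) • (1 : Matrix V V ℝ) =
      (distMatrix H + (2 : ℝ) • (1 : Matrix W W ℝ)).submatrix f f := by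
  ext u v
  simp only [Matrix.add_apply, Matrix.smul_apply, Matrix.submatrix_apply, distMatrix]
  obtain rfl | huv := eq_or_ne u v
  · simp
  by_cases h : f u = f v
  · simp [dist_comap_of_apply_eq hf huv h (hH _), huv, h, Matrix.one_apply]
  · simp [dist_comap_of_apply_ne hf h, huv, h]

theorem rank_distMatrix_comap_add_two_smul_one {f : V → W} (hf : f.Surjective)
    (hH : ∀ a, ¬H.IsIsolated a) :
    (distMatrix (H.comap f) + (2 : ℝ) • (1 : Matrix V V ℝ)).rank =
      (distMatrix H + (2 : ℝ) • (1 : Matrix W W ℝ)).rank := by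
  rw [distMatrix_comap_add_two_smul_one hf hH, rank_submatrix_of_surjective _ hf hf]

theorem distMatrix_add_two_smul_one_of_isUniversal [DecidableRel G.Adj] {w : V}
    (hw : G.IsUniversal w) :
    distMatrix G + (2 : ℝ) • (1 : Matrix V V ℝ) =
      Matrix.of fun u v => if G.Adj u v then 1 else 2 := by
  ext u v
  simp only [Matrix.add_apply, Matrix.smul_apply, Matrix.of_apply, distMatrix]
  obtain rfl | huv := eq_or_ne u v
  · simp
  by_cases hadj : G.Adj u v
  · simp [SimpleGraph.dist_eq_one_iff_adj.2 hadj, huv, hadj]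
  · have hu : w ≠ u := fun h => hadj (h ▸ hw (h ▸ huv))
    have hv : w ≠ v := fun h => hadj (h ▸ (hw (h ▸ Ne.symm huv)).symm)
    simp [dist_eq_two_of_adj_of_adj huv hadj (hw hu).symm (hw hv).symm, huv, hadj]

theorem isRoot_charpoly_distMatrix_neg_one_of_adj_iff_adj {u v : V} (hadj : G.Adj u v)
    (h : ∀ y, y ≠ u → y ≠ v → (G.Adj u y ↔ G.Adj v y)) :
    (distMatrix G).charpoly.IsRoot (-1) := by
  rw [Polynomial.IsRoot, Matrix.eval_charpoly]
  refine Matrix.det_zero_of_row_eq hadj.ne ?_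
  have huv : G.dist u v = 1 := SimpleGraph.dist_eq_one_iff_adj.2 hadj
  have hvu : G.dist v u = 1 := SimpleGraph.dist_eq_one_iff_adj.2 hadj.symm
  ext x
  simp only [Matrix.sub_apply, Matrix.scalar_apply, Matrix.diagonal_apply, distMatrix]
  by_cases hu : x = u
  · simp [hu, hvu, hadj.ne']
  by_cases hv : x = v
  · simp [hv, huv, hadj.ne]
  · simp [dist_eq_dist_of_adj_iff_adj h hu hv, Ne.symm hu, Ne.symm hv]

end DistMatrix

namespace T4

variable {t : ℕ}

theorem adj_iff {i j : Fin (t + 6)} : (T4 t).Adj i j ↔ i.val ≠ j.val ∧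
    (i.val = 0 ∨ j.val = 0 ∨
      (i.val, j.val) ∈ [(1, 2), (3, 4), (4, 5), (2, 1), (4, 3), (5, 4)]) := by
  simp only [T4, SimpleGraph.fromRel_adj, ne_eq, Fin.ext_iff, Fin.val_zero, List.mem_cons,
    List.not_mem_nil, Prod.mk.injEq, or_false]
  grind

/-- The graph obtained from `T₄ᵗ` by identifying vertices with the same neighbours: the triangles
`0,1,2` and `0,3,4` and the pendant edge `0,5`. The vertex `3` stands for `u₁` and `u₃`, the
vertex `5` for all pendant vertices. -/
def twinQuotient : SimpleGraph (Fin 6) :=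
  SimpleGraph.fromRel fun a b => (a = 0 ∧ b ≠ 0) ∨ (a.val, b.val) ∈ [(1, 2), (3, 4)]

theorem twinQuotient_adj_iff {a b : Fin 6} : twinQuotient.Adj a b ↔ a.val ≠ b.val ∧
    (a.val = 0 ∨ b.val = 0 ∨ (a.val, b.val) ∈ [(1, 2), (3, 4), (2, 1), (4, 3)]) := by
  simp only [twinQuotient, SimpleGraph.fromRel_adj, ne_eq, Fin.ext_iff, Fin.val_zero,
    List.mem_cons, List.not_mem_nil, Prod.mk.injEq, or_false]
  omega

instance : DecidableRel twinQuotient.Adj := fun _ _ => decidable_of_iff' _ twinQuotient_adj_iff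

/-- The vertex of `T4.twinQuotient` that represents a vertex of `T₄ᵗ`. -/
def twinClass (i : Fin (t + 6)) : Fin 6 :=
  ⟨if i.val < 5 then i.val else if i.val = 5 then 3 else 5, by split_ifs <;> omega⟩

theorem val_twinClass_cases (i : Fin (t + 6)) :
    i.val < 5 ∧ (twinClass i).val = i.val ∨ i.val = 5 ∧ (twinClass i).val = 3 ∨
      5 < i.val ∧ (twinClass i).val = 5 := by
  simp only [twinClass]
  split_ifs <;> omega

theorem twinClass_surjective (ht : 1 ≤ t) : (twinClass (t := t)).Surjective := by
  intro a
  obtain rfl | ha := eq_or_ne a 5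
  · exact ⟨⟨6, by omega⟩, rfl⟩
  · have hclass := val_twinClass_cases (t := t) ⟨a, by omega⟩
    dsimp only at hclass
    exact ⟨⟨a, by omega⟩, Fin.ext (by omega)⟩

theorem eq_comap_twinClass : T4 t = twinQuotient.comap twinClass := by
  ext i j
  simp only [adj_iff, SimpleGraph.comap_adj, twinQuotient_adj_iff, ne_eq, List.mem_cons,
    List.not_mem_nil, Prod.mk.injEq, or_false]
  obtain ⟨_, hi⟩ | ⟨_, hi⟩ | ⟨_, hi⟩ := val_twinClass_cases i <;>
  obtain ⟨_, hj⟩ | ⟨_, hj⟩ | ⟨_, hj⟩ := val_twinClass_cases j <;>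
  simp only [hi, hj] <;> grind

theorem isUniversal_twinQuotient : twinQuotient.IsUniversal 0 := by
  simp only [SimpleGraph.IsUniversal]
  decide

theorem not_isIsolated_twinQuotient (a : Fin 6) : ¬twinQuotient.IsIsolated a :=
  SimpleGraph.exists_adj_iff_not_isIsolated.1 <|
    (SimpleGraph.Connected.of_isUniversal isUniversal_twinQuotient).preconnected
      |>.exists_adj_of_nontrivial a

theorem isUnit_distMatrix_twinQuotient :
    IsUnit (distMatrix twinQuotient + (2 : ℝ) • (1 : Matrix (Fin 6) (Fin 6) ℝ)) := by
  rw [← Matrix.mulVec_injective_iff_isUnit, ← Matrix.coe_mulVecLin,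
    injective_iff_map_eq_zero, distMatrix_add_two_smul_one_of_isUniversal isUniversal_twinQuotient]
  intro x hx
  have hrow (i : Fin 6) : ∑ j, (if twinQuotient.Adj i j then 1 else 2) * x j = 0 := congrFun hx i
  have hv := hrow 0
  have hv₁ := hrow 1
  have hv₂ := hrow 2
  have hu₁ := hrow 3
  have hu₂ := hrow 4
  have hp := hrow 5
  simp +decide only [Fin.sum_univ_six, if_true, if_false] at hv hv₁ hv₂ hu₁ hu₂ hp
  have hx₁ : x 1 = 0 := by linarith
  have hx₂ : x 2 = 0 := by linarith
  have hx₃ : x 3 = 0 := by linarith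
  have hx₄ : x 4 = 0 := by linarith
  have hx₀ : x 0 = 0 := by linarith
  have hx₅ : x 5 = 0 := by linarith
  ext i
  fin_cases i <;> assumption

theorem rank_distMatrix_add_two_smul_one (ht : 1 ≤ t) :
    (distMatrix (T4 t) + (2 : ℝ) • (1 : Matrix (Fin (t + 6)) (Fin (t + 6)) ℝ)).rank = 6 := by
  rw [eq_comap_twinClass, rank_distMatrix_comap_add_two_smul_one (twinClass_surjective ht)
    not_isIsolated_twinQuotient, Matrix.rank_of_isUnit _ isUnit_distMatrix_twinQuotient,
    Fintype.card_fin]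

theorem adj_one_two : (T4 t).Adj 1 2 := by
  simp only [adj_iff, Fin.val_one, Fin.val_two]
  decide

theorem adj_one_iff_adj_two {y : Fin (t + 6)} (h₁ : y ≠ 1) (h₂ : y ≠ 2) :
    (T4 t).Adj 1 y ↔ (T4 t).Adj 2 y := by
  simp only [ne_eq, Fin.ext_iff, Fin.val_one, Fin.val_two] at h₁ h₂
  simp only [adj_iff, Fin.val_one, Fin.val_two, List.mem_cons, List.not_mem_nil, Prod.mk.injEq,
    or_false]
  omega

end T4

/-- For `t ≥ 1`, `-2` is a distance eigenvalue of `T₄ᵗ` of multiplicity at least `t`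
(equivalently, `rank(D + 2I) = 6`), and `-1` is a distance eigenvalue of multiplicity
at least `1`. -/
theorem stmt16 (t : ℕ) (ht : 1 ≤ t) :
    t ≤ (distMatrix (T4 t)).charpoly.rootMultiplicity (-2) ∧
    (distMatrix (T4 t) + (2 : ℝ) • (1 : Matrix (Fin (t + 6)) (Fin (t + 6)) ℝ)).rank = 6 ∧
    1 ≤ (distMatrix (T4 t)).charpoly.rootMultiplicity (-1) := by
  have hrank := T4.rank_distMatrix_add_two_smul_one ht
  have hcard := card_le_rank_add_rootMultiplicity_charpoly (distMatrix (T4 t)) (-2)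
  rw [neg_smul, sub_neg_eq_add, hrank, Fintype.card_fin] at hcard
  have hroot : (distMatrix (T4 t)).charpoly.IsRoot (-1) :=
    isRoot_charpoly_distMatrix_neg_one_of_adj_iff_adj T4.adj_one_two
      fun _ => T4.adj_one_iff_adj_two
  exact ⟨by omega, hrank, (rootMultiplicity_pos (Matrix.charpoly_monic _).ne_zero).2 hroot⟩
end
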